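/- Analyticity of the marginal entropy in the complex domain: let F be a probability measure on [0,∞) with ∫₀^∞ x dF(x) ≤ 𝖲, and let f(y;F) = ∫₀^∞ K(x,y) dF(x) be the output density. Define, for complex z with Re(z) > 0, the extended kernel K(z,y) = (1/(2π)) ∫_{−π}^{π} exp(−(y + z + 𝖨 + 2·√z·√𝖨·cos θ)) · B(y·(z + 𝖨 + 2·√z·√𝖨·cos θ)) dθ, where √z is the principal square root and B(u) := Σ_{k≥0} uᵏ/(k!)² is the entire function satisfying B(u) = I₀(2√u) for u ≥ 0. Then the function z ↦ −∫₀^∞ K(z,y) · ln f(y;F) dy is well defined and complex-analytic on the open right half-plane { z ∈ ℂ : Re(z) > 0 }, and it agrees with the marginal entropy h(x;F) = −∫₀^∞ K(x,y)·ln f(y;F) dy for real z = x > 0. -/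

import Mathlib

/-!
Analyticity of an integral of holomorphic functions follows from a locally uniform integrable bound
(`differentiableAt_integral_of_dominated`: Cauchy's estimate controls the derivatives). It is
applied twice, to the angular integral defining `Kc` and to the integral over `y`.

The bound comes from the elementary inequality `|B u| ≤ e^p e^q` whenever `|u| ≤ p q` with
`p, q ≥ 0` (`norm_B_le`). With `p = y / 2` and `q = 2 M` it yields `|Kc I z y| ≤ e^{3M} e^{-y/2}`,
where `M` bounds `|z + I + 2 √z √I cos θ|` locally uniformly in `z`. With `p = y` and
`q = x + I + 2 √(x I) cos θ` it yields `K ≤ 1`. Together with `K I x y ≥ e^{-(y + 2x + 2I)}` this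
gives `|ln f(y; F)| ≤ y + C`, so the integrand over `y` is dominated by a multiple of `e^{-y/4}`.

For real `x > 0` the two kernels coincide because `B u = I₀(2 √u)` for `u ≥ 0`, which is the power
series of the Bessel function (`hasSum_besselI0`).
-/

open MeasureTheory Real Filter Topology

noncomputable def besselI0 (r : ℝ) : ℝ :=
  (1 / (2 * π)) * ∫ t in (0:ℝ)..(2 * π), Real.exp (r * Real.cos t)

/-- The channel kernel, in its alternative form. -/
noncomputable def K (I x y : ℝ) : ℝ :=
  (1 / (2 * π)) * ∫ θ in (-π)..π,
    Real.exp (-(y + x + I + 2 * Real.sqrt (x * I) * Real.cos θ)) *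
      besselI0 (2 * Real.sqrt (y * (x + I + 2 * Real.sqrt (x * I) * Real.cos θ)))

/-- The entire function `B` with `B u = I₀(2 √u)` for `u ≥ 0`. -/
noncomputable def B (u : ℂ) : ℂ := ∑' k : ℕ, u ^ k / ((Nat.factorial k : ℂ)) ^ 2

/-- The extension of the kernel to complex first argument, using the principal square root. -/
noncomputable def Kc (I : ℝ) (z : ℂ) (y : ℝ) : ℂ :=
  (1 / (2 * π) : ℝ) * ∫ θ in (-π)..π,
    Complex.exp (-((y : ℂ) + z + (I : ℂ) +
        2 * z ^ ((1:ℂ)/2) * (Real.sqrt I : ℂ) * (Real.cos θ : ℂ))) *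
      B ((y : ℂ) * (z + (I : ℂ) + 2 * z ^ ((1:ℂ)/2) * (Real.sqrt I : ℂ) * (Real.cos θ : ℂ)))

/-! ### Holomorphic parameter integrals -/

/-- An integral of holomorphic functions with a common integrable bound on a disc is holomorphic at
its centre. No hypothesis on the derivatives is needed, since Cauchy's estimate bounds them. -/
lemma differentiableAt_integral_of_dominated {α : Type*} [MeasurableSpace α] {μ : Measure α}
    {g : ℂ → α → ℂ} {z₀ : ℂ} {r : ℝ} (hr : 0 < r) {bound : α → ℝ}
    (hmeas : ∀ z ∈ Metric.ball z₀ r, AEStronglyMeasurable (g z) μ)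
    (hdiff : ∀ᵐ a ∂μ, DifferentiableOn ℂ (fun z => g z a) (Metric.ball z₀ r))
    (hbound : ∀ᵐ a ∂μ, ∀ z ∈ Metric.ball z₀ r, ‖g z a‖ ≤ bound a)
    (hint : Integrable bound μ) :
    DifferentiableAt ℂ (fun z => ∫ a, g z a ∂μ) z₀ := by
  have hz₀ : z₀ ∈ Metric.ball z₀ r := Metric.mem_ball_self hr
  have hderiv : ∀ᵐ a ∂μ, ∀ z ∈ Metric.ball z₀ (r / 2),
      HasDerivAt (fun z => g z a) (deriv (fun z => g z a) z) z := by
    filter_upwards [hdiff] with a ha z hz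
    have hz' : z ∈ Metric.ball z₀ r := Metric.ball_subset_ball (by linarith) hz
    exact (ha.differentiableAt (Metric.isOpen_ball.mem_nhds hz')).hasDerivAt
  refine (hasDerivAt_integral_of_dominated_loc_of_deriv_le
    (F := g) (F' := fun z a => deriv (fun z => g z a) z)
    (bound := fun a => bound a / (r / 4)) (s := Metric.ball z₀ (r / 2))
    (Metric.ball_mem_nhds z₀ (by positivity)) ?_ ?_ ?_ ?_ (hint.div_const _)
    hderiv).2.differentiableAt
  · filter_upwards [Metric.ball_mem_nhds z₀ hr] with z hz using hmeas z hz
  · refine hint.mono' (hmeas z₀ hz₀) ?_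
    filter_upwards [hbound] with a ha using ha z₀ hz₀
  · -- the derivative at `z₀` is an a.e. limit of difference quotients along a sequence
    have hseq : Tendsto (fun n : ℕ => ((r / 2 / ((n : ℝ) + 1) : ℝ) : ℂ)) atTop (𝓝[≠] 0) := by
      refine tendsto_nhdsWithin_iff.2 ⟨?_, Eventually.of_forall fun n => ?_⟩
      · have : Tendsto (fun n : ℕ => (r / 2 / ((n : ℝ) + 1) : ℝ)) atTop (𝓝 0) := by
          have := (tendsto_one_div_add_atTop_nhds_zero_nat (𝕜 := ℝ)).const_mul (r / 2)
          simpa [div_eq_mul_inv] using this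
        have h := (Complex.continuous_ofReal.tendsto 0).comp this
        rw [Complex.ofReal_zero] at h
        exact h
      · have : (0 : ℝ) < r / 2 / ((n : ℝ) + 1) := by positivity
        simpa using Complex.ofReal_ne_zero.2 this.ne'
    refine aestronglyMeasurable_of_tendsto_ae atTop
      (f := fun (n : ℕ) a => ((r / 2 / ((n : ℝ) + 1) : ℝ) : ℂ)⁻¹ •
        (g (z₀ + ((r / 2 / ((n : ℝ) + 1) : ℝ) : ℂ)) a - g z₀ a)) (fun n => ?_) ?_
    · refine AEStronglyMeasurable.fun_const_smul ((hmeas _ ?_).sub (hmeas z₀ hz₀)) _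
      have hpos : (0 : ℝ) < r / 2 / ((n : ℝ) + 1) := by positivity
      have hle : r / 2 / ((n : ℝ) + 1) ≤ r / 2 :=
        div_le_self (by positivity) (by linarith [(Nat.cast_nonneg n : (0 : ℝ) ≤ n)])
      rw [Metric.mem_ball, dist_eq_norm, add_sub_cancel_left, Complex.norm_real,
        Real.norm_of_nonneg hpos.le]
      linarith
    · filter_upwards [hderiv] with a ha
      have := (ha z₀ (Metric.mem_ball_self (by positivity))).tendsto_slope_zero
      exact this.comp hseq
  · -- Cauchy's estimate on discs of radius `r / 4`
    filter_upwards [hdiff, hbound] with a ha hb z hz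
    have hsub : Metric.closedBall z (r / 4) ⊆ Metric.ball z₀ r := by
      intro w hw
      rw [Metric.mem_closedBall] at hw
      rw [Metric.mem_ball] at hz ⊢
      linarith [dist_triangle w z z₀]
    refine Complex.norm_deriv_le_of_forall_mem_sphere_norm_le (by positivity) ?_
      fun w hw => hb w (hsub (Metric.sphere_subset_closedBall hw))
    refine DifferentiableOn.diffContOnCl ((ha.mono hsub).mono ?_)
    rw [closure_ball _ (by positivity)]

/-! ### The entire function `B` and the Bessel function -/

/-- Splitting a bound `|u| ≤ p q` into two factors, one factorial is spent on each: this gives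
`|B u| ≤ e^p e^q` for every such factorization. -/
lemma norm_B_term_le {p q : ℝ} (hp : 0 ≤ p) (hq : 0 ≤ q) {u : ℂ} (hu : ‖u‖ ≤ p * q) (k : ℕ) :
    ‖u ^ k / (Nat.factorial k : ℂ) ^ 2‖ ≤ p ^ k / (Nat.factorial k : ℝ) * Real.exp q := by
  have h1 : ‖u‖ ^ k ≤ p ^ k * q ^ k := by
    rw [← mul_pow]; exact pow_le_pow_left₀ (norm_nonneg _) hu k
  rw [norm_div, norm_pow, norm_pow, Complex.norm_natCast]
  calc ‖u‖ ^ k / (Nat.factorial k : ℝ) ^ 2 ≤ p ^ k * q ^ k / (Nat.factorial k : ℝ) ^ 2 := by gcongr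
    _ = p ^ k / (Nat.factorial k : ℝ) * (q ^ k / (Nat.factorial k : ℝ)) := by ring
    _ ≤ _ := by
      gcongr
      exact Real.pow_div_factorial_le_exp q hq k

lemma hasSum_exp_mul_exp (p q : ℝ) :
    HasSum (fun k : ℕ => p ^ k / (Nat.factorial k : ℝ) * Real.exp q)
      (Real.exp p * Real.exp q) := by
  have := NormedSpace.expSeries_div_hasSum_exp (𝔸 := ℝ) p
  rw [← Real.exp_eq_exp_ℝ] at this
  exact this.mul_right _

lemma norm_B_le {p q : ℝ} (hp : 0 ≤ p) (hq : 0 ≤ q) {u : ℂ} (hu : ‖u‖ ≤ p * q) :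
    ‖B u‖ ≤ Real.exp p * Real.exp q :=
  tsum_of_norm_bounded (hasSum_exp_mul_exp p q) (norm_B_term_le hp hq hu)

lemma differentiable_B : Differentiable ℂ B := by
  intro u
  have hd : DifferentiableOn ℂ B (Metric.ball 0 (‖u‖ + 1)) := by
    refine Complex.differentiableOn_tsum_of_summable_norm
      (hasSum_exp_mul_exp (‖u‖ + 1) 1).summable (fun k => by fun_prop) Metric.isOpen_ball
      fun k w hw => norm_B_term_le (by positivity) zero_le_one ?_ k
    simpa using (mem_ball_zero_iff.1 hw).le
  exact hd.differentiableAt (Metric.isOpen_ball.mem_nhds (by simp))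

lemma integral_cos_pow_odd (k : ℕ) : ∫ t in (0:ℝ)..(2 * π), Real.cos t ^ (2 * k + 1) = 0 := by
  induction k with
  | zero => simp
  | succ k ih =>
    rw [show 2 * (k + 1) + 1 = (2 * k + 1) + 2 by ring, integral_cos_pow, ih]
    simp

lemma integral_cos_pow_even' (k : ℕ) :
    ∫ t in (0:ℝ)..(2 * π), Real.cos t ^ (2 * k) =
      2 * π * (Nat.factorial (2 * k) : ℝ) / (4 ^ k * (Nat.factorial k : ℝ) ^ 2) := by
  induction k with
  | zero => simp
  | succ k ih =>
    rw [show 2 * (k + 1) = 2 * k + 2 by ring, integral_cos_pow, ih]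
    simp only [Nat.factorial_succ, Real.sin_two_pi, Real.sin_zero]
    push_cast
    field_simp
    ring

/-- The power series of `I₀`, by integrating the exponential series termwise; only the even
moments of `cos` survive. -/
lemma hasSum_besselI0 {u : ℝ} (hu : 0 ≤ u) :
    HasSum (fun k : ℕ => u ^ k / (Nat.factorial k : ℝ) ^ 2) (besselI0 (2 * √u)) := by
  set r := 2 * √u with hr
  have hr0 : 0 ≤ r := by positivity
  have h1 : HasSum (fun n : ℕ => ∫ t in (0:ℝ)..(2 * π), (r * Real.cos t) ^ n / (Nat.factorial n : ℝ))
      (∫ t in (0:ℝ)..(2 * π), Real.exp (r * Real.cos t)) := by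
    refine intervalIntegral.hasSum_integral_of_dominated_convergence
      (fun n _ => r ^ n / (Nat.factorial n : ℝ)) (fun n => ?_) (fun n => ?_) ?_ ?_ ?_
    · exact Continuous.aestronglyMeasurable (by fun_prop)
    · refine Eventually.of_forall fun t _ => ?_
      rw [norm_div, norm_pow, norm_mul, Real.norm_natCast, Real.norm_of_nonneg hr0]
      gcongr
      exact mul_le_of_le_one_right hr0 (Real.abs_cos_le_one t)
    · exact Eventually.of_forall fun t _ => Real.summable_pow_div_factorial r
    · exact intervalIntegrable_const
    · refine Eventually.of_forall fun t _ => ?_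
      simpa using hasSum_exp_mul_exp (r * Real.cos t) 0
  have h2 := h1.mul_left (1 / (2 * π))
  have hodd : ∀ n ∉ Set.range (fun k : ℕ => 2 * k), (1 / (2 * π)) *
      ∫ t in (0:ℝ)..(2 * π), (r * Real.cos t) ^ n / (Nat.factorial n : ℝ) = 0 := by
    intro n hn
    obtain ⟨k, rfl⟩ : Odd n := by
      rw [← Nat.not_even_iff_odd]
      rintro ⟨k, rfl⟩
      exact hn ⟨k, by simp only; ring⟩
    simp only [mul_pow, intervalIntegral.integral_div, intervalIntegral.integral_const_mul,
      integral_cos_pow_odd]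
    simp
  have hinj : Function.Injective (fun k : ℕ => 2 * k) := fun a b h => by simpa using h
  have h3 := (hinj.hasSum_iff hodd).2 h2
  rw [← besselI0] at h3
  convert h3 using 1
  ext k
  simp only [Function.comp, mul_pow, intervalIntegral.integral_div,
    intervalIntegral.integral_const_mul, integral_cos_pow_even']
  have h4 : r ^ (2 * k) = 4 ^ k * u ^ k := by
    rw [pow_mul, hr, mul_pow, Real.sq_sqrt hu, ← mul_pow]; norm_num
  rw [h4]
  field_simp

lemma ofReal_besselI0 {u : ℝ} (hu : 0 ≤ u) : ((besselI0 (2 * √u) : ℝ) : ℂ) = B u := by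
  have := Complex.hasSum_ofReal.2 (hasSum_besselI0 hu)
  rw [B, ← this.tsum_eq]
  push_cast
  rfl

lemma one_le_besselI0 {u : ℝ} (hu : 0 ≤ u) : 1 ≤ besselI0 (2 * √u) := by
  have := le_hasSum (hasSum_besselI0 hu) 0 fun k _ => by positivity
  simpa using this

lemma besselI0_le {p q : ℝ} (hp : 0 ≤ p) (hq : 0 ≤ q) :
    besselI0 (2 * √(p * q)) ≤ Real.exp (p + q) := by
  have hpq := mul_nonneg hp hq
  have h := norm_B_le hp hq (u := ((p * q : ℝ) : ℂ))
    (by rw [Complex.norm_real, Real.norm_of_nonneg hpq])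
  rw [← ofReal_besselI0 hpq, Complex.norm_real, ← Real.exp_add] at h
  exact (le_abs_self _).trans h

lemma continuous_besselI0 : Continuous besselI0 := by
  unfold besselI0
  refine continuous_const.mul
    (intervalIntegral.continuous_parametric_intervalIntegral_of_continuous' (by fun_prop) _ _)

/-! ### The real kernel -/

lemma kernelArg_nonneg {I x : ℝ} (hI : 0 ≤ I) (hx : 0 ≤ x) (θ : ℝ) :
    0 ≤ x + I + 2 * √(x * I) * Real.cos θ := by
  rw [Real.sqrt_mul hx]
  have h1 := Real.neg_one_le_cos θ
  have h2 : 0 ≤ √x * √I := by positivity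
  nlinarith [sq_nonneg (√x - √I), Real.sq_sqrt hx, Real.sq_sqrt hI]

lemma kernelArg_le {I x : ℝ} (hI : 0 ≤ I) (hx : 0 ≤ x) (θ : ℝ) :
    x + I + 2 * √(x * I) * Real.cos θ ≤ 2 * x + 2 * I := by
  rw [Real.sqrt_mul hx]
  have h1 := Real.cos_le_one θ
  have h2 : 0 ≤ √x * √I := by positivity
  nlinarith [sq_nonneg (√x - √I), Real.sq_sqrt hx, Real.sq_sqrt hI]

lemma continuous_K (I : ℝ) : Continuous fun p : ℝ × ℝ => K I p.1 p.2 := by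
  have := continuous_besselI0
  unfold K
  exact continuous_const.mul
    (intervalIntegral.continuous_parametric_intervalIntegral_of_continuous' (by fun_prop) _ _)

/-- The upper bound is `I₀(2√(y a)) ≤ e^{y + a}`; the lower bound uses only `I₀ ≥ 1` and
`2 √(x I) ≤ x + I`. -/
lemma K_mem_Icc {I x y : ℝ} (hI : 0 ≤ I) (hx : 0 ≤ x) (hy : 0 ≤ y) :
    K I x y ∈ Set.Icc (Real.exp (-(y + (2 * x + 2 * I)))) 1 := by
  have hB := continuous_besselI0
  have hpi := Real.pi_pos
  have hcont : IntervalIntegrable (fun θ : ℝ =>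
      Real.exp (-(y + x + I + 2 * √(x * I) * Real.cos θ)) *
      besselI0 (2 * √(y * (x + I + 2 * √(x * I) * Real.cos θ)))) volume (-π) π :=
    Continuous.intervalIntegrable (by fun_prop) _ _
  have hmean : ∀ c : ℝ, (1 / (2 * π)) * ∫ _ in (-π)..π, c = c := fun c => by
    rw [intervalIntegral.integral_const, smul_eq_mul]; field_simp; ring
  constructor
  · rw [← hmean (Real.exp _), K]
    refine mul_le_mul_of_nonneg_left
      (intervalIntegral.integral_mono_on (by linarith) (by simp) hcont fun θ _ => ?_)
      (by positivity)
    have h1 := one_le_besselI0 (mul_nonneg hy (kernelArg_nonneg hI hx θ))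
    refine le_trans (Real.exp_le_exp.2 ?_) (le_mul_of_one_le_right (Real.exp_pos _).le h1)
    linarith [kernelArg_le hI hx θ]
  · rw [← hmean 1, K]
    refine mul_le_mul_of_nonneg_left
      (intervalIntegral.integral_mono_on (by linarith) hcont (by simp) fun θ _ => ?_)
      (by positivity)
    have h1 := besselI0_le hy (kernelArg_nonneg hI hx θ)
    refine (mul_le_mul_of_nonneg_left h1 (Real.exp_pos _).le).trans ?_
    rw [← Real.exp_add, Real.exp_le_one_iff]
    linarith

lemma measurable_log_output (I : ℝ) (F : Measure ℝ) [IsProbabilityMeasure F] :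
    Measurable fun y : ℝ => Real.log (∫ x, K I x y ∂F) := by
  have h : StronglyMeasurable fun p : ℝ × ℝ => K I p.2 p.1 :=
    ((continuous_K I).comp continuous_swap).stronglyMeasurable
  exact Real.measurable_log.comp h.integral_prod_right.measurable

/-- Linear growth of `|ln f(y; F)|`. The constant is `|ln ∫ e^{-(2x + 2I)} dF(x)|`, which is finite
because the integral is positive for every probability measure on `[0, ∞)`. -/
lemma exists_abs_log_output_le {I : ℝ} (hI : 0 ≤ I) (F : Measure ℝ) [IsProbabilityMeasure F]
    (hsupp : F (Set.Iio 0) = 0) :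
    ∃ C : ℝ, 0 ≤ C ∧ ∀ y : ℝ, 0 ≤ y → |Real.log (∫ x, K I x y ∂F)| ≤ y + C := by
  have hF : ∀ᵐ x ∂F, 0 ≤ x := by
    rw [ae_iff]; convert hsupp using 2; ext x; simp
  set c := ∫ x, Real.exp (-(2 * x + 2 * I)) ∂F with hc
  have hint : Integrable (fun x => Real.exp (-(2 * x + 2 * I))) F := by
    refine Integrable.of_bound (Continuous.aestronglyMeasurable (by fun_prop)) 1 ?_
    filter_upwards [hF] with x hx
    rw [Real.norm_of_nonneg (Real.exp_pos _).le, Real.exp_le_one_iff]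
    linarith
  have hc0 : 0 < c := integral_exp_pos hint
  refine ⟨|Real.log c|, abs_nonneg _, fun y hy => ?_⟩
  have hK : ∀ᵐ x ∂F, K I x y ∈ Set.Icc (Real.exp (-(y + (2 * x + 2 * I)))) 1 := by
    filter_upwards [hF] with x hx using K_mem_Icc hI hx hy
  have hKint : Integrable (fun x => K I x y) F := by
    refine Integrable.of_bound
      ((continuous_K I).comp (Continuous.prodMk_left y)).aestronglyMeasurable 1 ?_
    filter_upwards [hK] with x hx
    rw [Real.norm_of_nonneg ((Real.exp_pos _).le.trans hx.1)]
    exact hx.2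
  have hlow : Real.exp (-y) * c ≤ ∫ x, K I x y ∂F := by
    rw [hc, ← integral_const_mul]
    refine integral_mono_ae (hint.const_mul _) hKint ?_
    filter_upwards [hK] with x hx
    rw [← Real.exp_add]
    convert hx.1 using 2; ring
  have hup : ∫ x, K I x y ∂F ≤ 1 := by
    have : ∫ x, K I x y ∂F ≤ ∫ _, (1 : ℝ) ∂F :=
      integral_mono_ae hKint (integrable_const _) (hK.mono fun x hx => hx.2)
    simpa using this
  have hpos : 0 < Real.exp (-y) * c := by positivity
  have h1 := Real.log_le_log hpos hlow
  have h2 := Real.log_nonpos (hpos.le.trans hlow) hup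
  rw [Real.log_mul (Real.exp_pos _).ne' hc0.ne', Real.log_exp] at h1
  rw [abs_of_nonpos h2]
  linarith [neg_abs_le (Real.log c)]

/-! ### The complex kernel -/

/-- The integrand of the complex kernel `Kc`. -/
noncomputable def kernelIntegrand (I : ℝ) (z : ℂ) (y θ : ℝ) : ℂ :=
  Complex.exp (-((y : ℂ) + z + (I : ℂ) +
        2 * z ^ ((1:ℂ)/2) * (Real.sqrt I : ℂ) * (Real.cos θ : ℂ))) *
      B ((y : ℂ) * (z + (I : ℂ) + 2 * z ^ ((1:ℂ)/2) * (Real.sqrt I : ℂ) * (Real.cos θ : ℂ)))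

lemma Kc_eq (I : ℝ) (z : ℂ) (y : ℝ) :
    Kc I z y = (1 / (2 * π) : ℝ) * ∫ θ in (-π)..π, kernelIntegrand I z y θ := rfl

lemma norm_sqrt_le (z : ℂ) : ‖z ^ ((1:ℂ)/2)‖ ≤ 1 + ‖z‖ := by
  have h : (z ^ ((1:ℂ)/2)) ^ 2 = z := by
    simp
  have h2 : ‖z ^ ((1:ℂ)/2)‖ ^ 2 = ‖z‖ := by rw [← norm_pow, h]
  nlinarith [norm_nonneg (z ^ ((1:ℂ)/2)), sq_nonneg (‖z ^ ((1:ℂ)/2)‖ - 1)]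

/-- A bound for `|z + I + 2 √z √I cos θ|` valid for `|z| ≤ R`. -/
noncomputable def argBound (I R : ℝ) : ℝ := R + I + 2 * (1 + R) * √I

/-- The estimate `|B(y a)| ≤ e^{y/2} e^{2|a|}` loses only half of the decay of `e^{-y}`. -/
lemma norm_kernelIntegrand_le {I R y : ℝ} (hI : 0 ≤ I) (hy : 0 ≤ y) {z : ℂ} (hz : ‖z‖ ≤ R)
    (θ : ℝ) :
    ‖kernelIntegrand I z y θ‖ ≤ Real.exp (3 * argBound I R) * Real.exp (-(y / 2)) := by
  set a : ℂ := z + (I : ℂ) + 2 * z ^ ((1:ℂ)/2) * (Real.sqrt I : ℂ) * (Real.cos θ : ℂ) with ha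
  have hR : 0 ≤ R := (norm_nonneg z).trans hz
  have haM : ‖a‖ ≤ argBound I R := by
    have h1 : ‖2 * z ^ ((1:ℂ)/2) * (Real.sqrt I : ℂ) * (Real.cos θ : ℂ)‖
        ≤ 2 * (1 + R) * √I * 1 := by
      rw [norm_mul, norm_mul, norm_mul, Complex.norm_real, Complex.norm_real,
        Real.norm_of_nonneg (Real.sqrt_nonneg I), Complex.norm_two]
      gcongr
      · exact (norm_sqrt_le z).trans (by linarith)
      · exact Real.abs_cos_le_one θ
    calc ‖a‖ ≤ ‖z‖ + ‖(I : ℂ)‖ + _ := norm_add₃_le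
      _ ≤ R + I + 2 * (1 + R) * √I * 1 := by
        gcongr
        rw [Complex.norm_real, Real.norm_of_nonneg hI]
      _ = argBound I R := by rw [argBound, mul_one]
  have hM : 0 ≤ argBound I R := (norm_nonneg a).trans haM
  have hexp : ‖Complex.exp (-((y : ℂ) + z + (I : ℂ) +
        2 * z ^ ((1:ℂ)/2) * (Real.sqrt I : ℂ) * (Real.cos θ : ℂ)))‖
      ≤ Real.exp (-y + argBound I R) := by
    rw [show -((y : ℂ) + z + (I : ℂ) + 2 * z ^ ((1:ℂ)/2) * (Real.sqrt I : ℂ) * (Real.cos θ : ℂ))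
      = -((y : ℂ) + a) by rw [ha]; ring, Complex.norm_exp, Real.exp_le_exp]
    have := (neg_le_of_abs_le (Complex.abs_re_le_norm a))
    simp only [Complex.neg_re, Complex.add_re, Complex.ofReal_re]
    linarith
  have hB : ‖B ((y : ℂ) * a)‖ ≤ Real.exp (y / 2) * Real.exp (2 * argBound I R) := by
    refine norm_B_le (by positivity) (by positivity) ?_
    rw [norm_mul, Complex.norm_real, Real.norm_of_nonneg hy]
    nlinarith
  rw [kernelIntegrand, norm_mul]
  refine (mul_le_mul hexp hB (norm_nonneg _) (Real.exp_pos _).le).trans_eq ?_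
  simp only [← Real.exp_add]
  congr 1; ring

lemma continuous_kernelIntegrand (I : ℝ) (z : ℂ) :
    Continuous fun p : ℝ × ℝ => kernelIntegrand I z p.1 p.2 := by
  have := differentiable_B.continuous
  unfold kernelIntegrand
  fun_prop

lemma differentiableAt_kernelIntegrand (I y θ : ℝ) {z : ℂ} (hz : 0 < z.re) :
    DifferentiableAt ℂ (fun z => kernelIntegrand I z y θ) z := by
  have hs : DifferentiableAt ℂ (fun z : ℂ => z ^ ((1:ℂ)/2)) z :=
    differentiableAt_id.cpow_const (Or.inl hz)
  have hB := differentiable_B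
  unfold kernelIntegrand
  fun_prop

lemma norm_Kc_le {I R y : ℝ} (hI : 0 ≤ I) (hy : 0 ≤ y) {z : ℂ} (hz : ‖z‖ ≤ R) :
    ‖Kc I z y‖ ≤ Real.exp (3 * argBound I R) * Real.exp (-(y / 2)) := by
  have hpi := Real.pi_pos
  have h := intervalIntegral.norm_integral_le_of_norm_le_const (a := -π) (b := π)
    fun θ _ => norm_kernelIntegrand_le hI hy hz θ
  rw [Kc_eq, norm_mul, Complex.norm_real, Real.norm_of_nonneg (by positivity)]
  refine (mul_le_mul_of_nonneg_left h (by positivity)).trans_eq ?_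
  rw [abs_of_pos (by linarith)]
  field_simp; ring

lemma continuous_Kc (I : ℝ) (z : ℂ) : Continuous fun y : ℝ => Kc I z y := by
  simp only [Kc_eq]
  exact continuous_const.mul
    (intervalIntegral.continuous_parametric_intervalIntegral_of_continuous'
      (continuous_kernelIntegrand I z) _ _)

/-- The disc of radius `Re z₀` about `z₀` stays in the right half-plane and is bounded. -/
lemma mem_ball_re {z₀ z : ℂ} (hz : z ∈ Metric.ball z₀ z₀.re) : 0 < z.re ∧ ‖z‖ ≤ 2 * ‖z₀‖ := by
  rw [Metric.mem_ball, dist_eq_norm] at hz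
  constructor
  · have := neg_le_of_abs_le (Complex.abs_re_le_norm (z - z₀))
    rw [Complex.sub_re] at this
    linarith
  · have h1 := norm_le_norm_add_norm_sub z₀ z
    have h2 := Complex.re_le_norm z₀
    rw [norm_sub_rev] at h1
    linarith

lemma differentiableAt_Kc {I y : ℝ} (hI : 0 ≤ I) (hy : 0 ≤ y) {z₀ : ℂ} (hz₀ : 0 < z₀.re) :
    DifferentiableAt ℂ (fun z => Kc I z y) z₀ := by
  have hpi := Real.pi_pos
  simp only [Kc_eq, intervalIntegral.integral_of_le (show -π ≤ π by linarith)]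
  refine DifferentiableAt.const_mul ?_ _
  refine differentiableAt_integral_of_dominated hz₀ (fun z _ => ?_)
    (Eventually.of_forall fun θ z hz => ?_)
    (Eventually.of_forall fun θ z hz => norm_kernelIntegrand_le hI hy (mem_ball_re hz).2 θ)
    (integrable_const _)
  · exact ((continuous_kernelIntegrand I z).comp (Continuous.prodMk_right y)).aestronglyMeasurable
  · exact (differentiableAt_kernelIntegrand I y θ (mem_ball_re hz).1).differentiableWithinAt

lemma Kc_ofReal {I x y : ℝ} (hI : 0 ≤ I) (hx : 0 < x) (hy : 0 ≤ y) :
    Kc I (x : ℂ) y = (K I x y : ℂ) := by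
  have hs : (x : ℂ) ^ ((1:ℂ)/2) * (√I : ℂ) = ((√(x * I) : ℝ) : ℂ) := by
    rw [Real.sqrt_mul hx.le, Real.sqrt_eq_rpow x, Complex.ofReal_mul, Complex.ofReal_cpow hx.le]
    norm_num
  rw [Kc_eq, K, Complex.ofReal_mul, ← intervalIntegral.integral_ofReal]
  congr 2
  ext θ
  rw [Complex.ofReal_mul, ofReal_besselI0 (mul_nonneg hy (kernelArg_nonneg hI hx.le θ)),
    kernelIntegrand, mul_assoc (2 : ℂ), hs]
  push_cast
  rfl

theorem stmt_15 (S I : ℝ) (hS : 0 ≤ S) (hI : 0 ≤ I)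
    (F : Measure ℝ) [IsProbabilityMeasure F] (hsupp : F (Set.Iio 0) = 0)
    (hmean : (∫ x, x ∂F) ≤ S) :
    AnalyticOnNhd ℂ
      (fun z : ℂ => -∫ y in Set.Ioi (0:ℝ), Kc I z y * (Real.log (∫ x, K I x y ∂F) : ℂ))
      {z : ℂ | 0 < z.re} ∧
    ∀ x : ℝ, 0 < x →
      (-∫ y in Set.Ioi (0:ℝ), Kc I (x : ℂ) y * (Real.log (∫ x', K I x' y ∂F) : ℂ))
        = ((-∫ y in Set.Ioi (0:ℝ), K I x y * Real.log (∫ x', K I x' y ∂F) : ℝ) : ℂ) := by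
  constructor
  · refine DifferentiableOn.analyticOnNhd (fun z₀ hz₀ => ?_)
      (isOpen_lt continuous_const Complex.continuous_re)
    obtain ⟨C, hC, hlog⟩ := exists_abs_log_output_le hI F hsupp
    set A := Real.exp (3 * argBound I (2 * ‖z₀‖))
    refine (DifferentiableAt.fun_neg (differentiableAt_integral_of_dominated
      (bound := fun y => A * (4 + C) * Real.exp (-(1 / 4) * y))
      hz₀ (fun z _ => ?_) ?_ ?_ ?_)).differentiableWithinAt
    · exact (continuous_Kc I z).aestronglyMeasurable.mul
        (Complex.measurable_ofReal.comp (measurable_log_output I F)).aestronglyMeasurable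
    · filter_upwards [ae_restrict_mem measurableSet_Ioi] with y hy z hz
      exact ((differentiableAt_Kc hI (le_of_lt hy) (mem_ball_re hz).1).mul_const
        _).differentiableWithinAt
    · filter_upwards [ae_restrict_mem measurableSet_Ioi] with y hy z hz
      have hy0 : 0 ≤ y := le_of_lt hy
      have h1 := norm_Kc_le hI hy0 (mem_ball_re hz).2
      -- `y + C ≤ (4 + C) e^{y/4}`, which costs half of the decay `e^{-y/2}` of the kernel
      have h2 : y + C ≤ (4 + C) * Real.exp (y / 4) := by
        nlinarith [Real.add_one_le_exp (y / 4)]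
      rw [norm_mul, Complex.norm_real, Real.norm_eq_abs]
      refine (mul_le_mul h1 ((hlog y hy0).trans h2) (abs_nonneg _) (by positivity)).trans_eq ?_
      rw [show -(1 / 4) * y = -(y / 2) + y / 4 by ring, Real.exp_add]
      ring
    · exact (exp_neg_integrableOn_Ioi 0 (by norm_num)).const_mul _
  · intro x hx
    rw [Complex.ofReal_neg, ← integral_complex_ofReal]
    congr 1
    refine setIntegral_congr_fun measurableSet_Ioi fun y hy => ?_
    simp only [Kc_ofReal hI hx (le_of_lt hy), Complex.ofReal_mul]
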